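/- Let M : ℝ² → ℝ be smooth with all partial derivatives up to order 9 square-integrable on ℝ², and let Ω := {x=(x₁,x₂,x₃)∈ℝ³ : x₁ > M(x₂,x₃)}. There exists a constant C > 0 (depending only on M) such that for every continuously differentiable f : closure(Ω) → ℝ with ∫_Ω |f|² dx < ∞ and ∫_Ω |∇f|² dx < ∞, one has (∫_Ω |f|⁶ dx)^{1/6} ≤ C (∫_Ω |∇f|² dx)^{1/2}. -/

import Mathlib

/- STATEMENT 4: critical Sobolev inequality ‖f‖_{L⁶(Ω)} ≤ C ‖∇f‖_{L²(Ω)} on the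
perturbed half-space Ω = {x ∈ ℝ³ : x₁ > M(x₂,x₃)}. -/

noncomputable section

open MeasureTheory Real Set Filter
open scoped ENNReal

abbrev E3 : Type := EuclideanSpace ℝ (Fin 3)
abbrev E2 : Type := EuclideanSpace ℝ (Fin 2)

/-- Projection on the tangential variables `x' = (x₂, x₃)`. -/
def proj2 (x : E3) : E2 := (WithLp.equiv 2 (Fin 2 → ℝ)).symm ![x 1, x 2]

/-- The perturbed half-space `Ω = {x : x₁ > M(x₂,x₃)}`. -/
def Omg (M : E2 → ℝ) : Set E3 := {x : E3 | M (proj2 x) < x 0}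

/-- fundamental theorem along a ray segment -/
theorem seg_bound {E F : Type*} [NormedAddCommGroup E] [NormedSpace ℝ E]
    [NormedAddCommGroup F] [NormedSpace ℝ F] [CompleteSpace F] {Ω : Set E} (hΩ : IsOpen Ω)
    {u : E → F} (hu : ContDiffOn ℝ 1 u Ω) (x v : E) (T : ℝ) (hT : 0 ≤ T)
    (hx : ∀ t : ℝ, 0 ≤ t → x + t • v ∈ Ω) :
    ‖u (x + T • v) - u x‖ₑ ≤ ∫⁻ t in Ioc 0 T, ‖fderiv ℝ u (x + t • v)‖ₑ * ‖v‖ₑ := by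
  have hd : ∀ t ∈ uIcc 0 T, HasDerivAt (fun t : ℝ => u (x + t • v))
      (fderiv ℝ u (x + t • v) v) t := by
    intro t ht
    rw [uIcc_of_le hT] at ht
    have h1 : HasFDerivAt u (fderiv ℝ u (x + t • v)) (x + t • v) :=
      ((hu.differentiableOn one_ne_zero).differentiableAt
        (hΩ.mem_nhds (hx t ht.1))).hasFDerivAt
    have h2 : HasDerivAt (fun t : ℝ => x + t • v) v t := by
      simpa using ((hasDerivAt_id t).smul_const v).const_add x
    exact h1.comp_hasDerivAt t h2
  have hc : ContinuousOn (fun t : ℝ => fderiv ℝ u (x + t • v) v) (uIcc 0 T) := by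
    have h1 : ContinuousOn (fderiv ℝ u) Ω := hu.continuousOn_fderiv_of_isOpen hΩ le_rfl
    have h2 : ContinuousOn (fun t : ℝ => fderiv ℝ u (x + t • v)) (uIcc 0 T) := by
      refine h1.comp (by fun_prop) ?_
      intro t ht
      rw [uIcc_of_le hT] at ht
      exact hx t ht.1
    exact h2.clm_apply continuousOn_const
  have := intervalIntegral.integral_eq_sub_of_hasDerivAt hd hc.intervalIntegrable
  simp only [zero_smul, add_zero] at this
  rw [← this, intervalIntegral.integral_of_le hT]
  refine (enorm_integral_le_lintegral_enorm _).trans ?_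
  gcongr with t
  exact ContinuousLinearMap.le_opENorm _ _

theorem unit_bound {E F : Type*} [NormedAddCommGroup E] [NormedSpace ℝ E]
    [NormedAddCommGroup F] [NormedSpace ℝ F] [CompleteSpace F]
    {u : E → F} (hu : ContDiff ℝ 1 u) (x v : E) (hv : ‖v‖ₑ = 1) :
    ‖u x‖ₑ ≤ ∫⁻ t in Ioc (0:ℝ) 1, (‖u (x + t • v)‖ₑ + ‖fderiv ℝ u (x + t • v)‖ₑ) := by
  have h1 : ∀ T ∈ Ioc (0:ℝ) 1, ‖u x‖ₑ ≤ ‖u (x + T • v)‖ₑ +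
      ∫⁻ t in Ioc (0:ℝ) 1, ‖fderiv ℝ u (x + t • v)‖ₑ := by
    intro T hT
    have := seg_bound isOpen_univ (contDiffOn_univ.2 hu) x v T hT.1.le (fun _ _ => mem_univ _)
    rw [hv] at this
    simp only [mul_one] at this
    calc ‖u x‖ₑ = ‖u (x + T • v) - (u (x + T • v) - u x)‖ₑ := by simp
      _ ≤ ‖u (x + T • v)‖ₑ + ‖(u (x + T • v) - u x)‖ₑ := enorm_sub_le
      _ ≤ _ := by
        gcongr
        refine this.trans ?_
        exact lintegral_mono_set (Ioc_subset_Ioc_right hT.2)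
  calc ‖u x‖ₑ = ∫⁻ t in Ioc (0:ℝ) 1, ‖u x‖ₑ := by simp
    _ ≤ ∫⁻ T in Ioc (0:ℝ) 1, (‖u (x + T • v)‖ₑ +
      ∫⁻ t in Ioc (0:ℝ) 1, ‖fderiv ℝ u (x + t • v)‖ₑ) :=
        setLIntegral_mono' measurableSet_Ioc h1
    _ = _ := by
      have hm : Measurable (fun t : ℝ => ‖u (x + t • v)‖ₑ) := by
        have := hu.continuous
        exact (Continuous.enorm (by fun_prop)).measurable
      rw [lintegral_add_left hm, lintegral_add_left hm]
      simp

theorem plane_bound {M : E2 → ℝ} (hM : ContDiff ℝ (⊤ : ℕ∞) M)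
    (hMint : ∀ j ≤ 9, Integrable fun x' : E2 => ‖iteratedFDeriv ℝ j M x'‖ ^ 2) :
    ∃ L : ℝ≥0∞, L ≠ ∞ ∧ ∀ x, ‖iteratedFDeriv ℝ 1 M x‖ₑ ≤ L := by
  have hcd : ∀ j : ℕ, ContDiff ℝ 1 (iteratedFDeriv ℝ j M) := fun j =>
    hM.iteratedFDeriv_right (m := 1) (by
      have : (1 : WithTop ℕ∞) + (j : ℕ) = ((1 + j : ℕ) : ℕ∞) := by push_cast; rfl
      rw [this]; exact_mod_cast le_top)
  have hcont : ∀ j : ℕ, Continuous (fun x => ‖iteratedFDeriv ℝ j M x‖ₑ) := fun j =>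
    (hcd j).continuous.enorm
  have key : ∀ j : ℕ, ∀ x v : E2, ‖v‖ₑ = 1 → ‖iteratedFDeriv ℝ j M x‖ₑ ≤
      ∫⁻ t in Ioc (0:ℝ) 1, (‖iteratedFDeriv ℝ j M (x + t • v)‖ₑ +
        ‖iteratedFDeriv ℝ (j+1) M (x + t • v)‖ₑ) := by
    intro j x v hv
    refine (unit_bound (hcd j) x v hv).trans (le_of_eq ?_)
    congr! 3 with t
    rw [← ofReal_norm, ← ofReal_norm, norm_fderiv_iteratedFDeriv]
  let e0 : E2 := EuclideanSpace.single 0 1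
  let e1 : E2 := EuclideanSpace.single 1 1
  have he0 : ‖e0‖ₑ = 1 := by rw [← ofReal_norm]; simp [e0]
  have he1 : ‖e1‖ₑ = 1 := by rw [← ofReal_norm]; simp [e1]
  let H : E2 → ℝ≥0∞ := fun x => ‖iteratedFDeriv ℝ 1 M x‖ₑ + ‖iteratedFDeriv ℝ 2 M x‖ₑ
    + (‖iteratedFDeriv ℝ 2 M x‖ₑ + ‖iteratedFDeriv ℝ 3 M x‖ₑ)
  let H2 : E2 → ℝ≥0∞ := fun x => ‖iteratedFDeriv ℝ 1 M x‖ₑ ^ 2 + ‖iteratedFDeriv ℝ 2 M x‖ₑ ^ 2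
    + (‖iteratedFDeriv ℝ 2 M x‖ₑ ^ 2 + ‖iteratedFDeriv ℝ 3 M x‖ₑ ^ 2)
  have hHm : Measurable H := by
    have := hcont 1; have := hcont 2; have := hcont 3
    exact (Continuous.measurable (by fun_prop))
  have hH2m : Measurable H2 := by
    have := (hcont 1).measurable; have := (hcont 2).measurable; have := (hcont 3).measurable
    fun_prop
  have hle : ∀ a : ℝ≥0∞, a ≤ 1 + a ^ 2 := by
    intro a
    rcases le_total a 1 with h | h
    · exact h.trans le_self_add
    · calc a = a * 1 := by simp
        _ ≤ a * a := by gcongr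
        _ = a ^ 2 := by ring
        _ ≤ _ := le_add_self
  have hHH : ∀ x, H x ≤ 4 + H2 x := by
    intro x
    calc H x ≤ (1 + _) + (1 + _) + ((1 + _) + (1 + _)) :=
          add_le_add (add_le_add (hle _) (hle _)) (add_le_add (hle _) (hle _))
      _ = 4 + H2 x := by simp only [H2]; ring
  have hstep : ∀ x, ‖iteratedFDeriv ℝ 1 M x‖ₑ ≤
      ∫⁻ t in Ioc (0:ℝ) 1, ∫⁻ s in Ioc (0:ℝ) 1, H (x + t • e0 + s • e1) := by
    intro x
    refine (key 1 x e0 he0).trans ?_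
    gcongr with t
    refine (add_le_add (key 1 _ e1 he1) (key 2 _ e1 he1)).trans ?_
    rw [← lintegral_add_left]
    have h1 := (hcont 1).measurable
    have h2 := (hcont 2).measurable
    exact (h1.comp (by fun_prop : Measurable fun s : ℝ => x + t • e0 + s • e1)).add
      (h2.comp (by fun_prop : Measurable fun s : ℝ => x + t • e0 + s • e1))
  let I : ℝ≥0∞ := ∫⁻ x, H2 x
  have hI : I ≠ ∞ := by
    have hj : ∀ j ≤ 9, ∫⁻ x, ‖iteratedFDeriv ℝ j M x‖ₑ ^ 2 ≠ ∞ := by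
      intro j hj
      have := (hMint j hj).2
      rw [hasFiniteIntegral_iff_enorm] at this
      simpa only [enorm_pow, enorm_norm] using this.ne
    have := (hcont 1).measurable; have := (hcont 2).measurable; have := (hcont 3).measurable
    simp only [I, H2]
    rw [lintegral_add_left (by fun_prop), lintegral_add_left (by fun_prop),
      lintegral_add_left (by fun_prop)]
    simp [hj 1, hj 2, hj 3]
  have hint : ∀ x, ∫⁻ t : ℝ, ∫⁻ s : ℝ, H2 (x + t • e0 + s • e1) = I := by
    intro x
    have h1 : I = ∫⁻ z, H2 (x + z) := (lintegral_add_left_eq_self H2 x).symm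
    have h2 := (EuclideanSpace.volume_preserving_symm_measurableEquiv_toLp (Fin 2)).symm
    have h3 := (volume_preserving_finTwoArrow ℝ).symm
    have hm : Measurable fun z => H2 (x + z) := by fun_prop
    rw [h1, ← h2.lintegral_comp hm, ← h3.lintegral_comp (by fun_prop)]
    rw [Measure.volume_eq_prod, lintegral_prod _ (by fun_prop)]
    refine lintegral_congr fun t => lintegral_congr fun s => ?_
    congr 1
    rw [add_assoc]
    congr 1
    ext i
    fin_cases i <;> simp [e0, e1, MeasurableEquiv.finTwoArrow]
  refine ⟨4 + I, by simp [hI], fun x => (hstep x).trans ?_⟩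
  calc _ ≤ ∫⁻ t in Ioc (0:ℝ) 1, ∫⁻ s in Ioc (0:ℝ) 1, (4 + H2 (x + t • e0 + s • e1)) := by
        gcongr; exact hHH _
    _ = 4 + ∫⁻ t in Ioc (0:ℝ) 1, ∫⁻ s in Ioc (0:ℝ) 1, H2 (x + t • e0 + s • e1) := by
        simp_rw [lintegral_add_left (measurable_const : Measurable fun _ : ℝ => (4:ℝ≥0∞))]
        simp [lintegral_add_left]
    _ ≤ _ := by
        rw [← hint x]
        gcongr 4 + ?_
        refine (setLIntegral_le_lintegral _ _).trans ?_
        exact lintegral_mono fun t => setLIntegral_le_lintegral _ _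

theorem M_lip {M : E2 → ℝ} (hM : ContDiff ℝ (⊤ : ℕ∞) M)
    (hMint : ∀ j ≤ 9, Integrable fun x' : E2 => ‖iteratedFDeriv ℝ j M x'‖ ^ 2) :
    ∃ L : NNReal, LipschitzWith L M := by
  obtain ⟨L, hL, h⟩ := plane_bound hM hMint
  lift L to NNReal using hL
  refine ⟨L, lipschitzWith_of_nnnorm_fderiv_le (𝕜 := ℝ) (hM.differentiable (by simp)) fun x => ?_⟩
  have := h x
  rw [← ofReal_norm, norm_iteratedFDeriv_one, ofReal_norm] at this
  simpa [enorm] using this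

theorem exists_scalar (A : (Fin 3 → ℝ) ≃L[ℝ] E3) :
    ∃ c : NNReal, c ≠ 0 ∧ (volume : Measure (Fin 3 → ℝ)).map A = c • (volume : Measure E3) := by
  have := A.isAddHaarMeasure_map (volume : Measure (Fin 3 → ℝ))
  have h := Measure.isAddLeftInvariant_eq_smul ((volume : Measure (Fin 3 → ℝ)).map A)
    (volume : Measure E3)
  refine ⟨_, ?_, h⟩
  intro h0
  rw [h0, zero_smul] at h
  exact (NeZero.ne ((volume : Measure (Fin 3 → ℝ)).map A)) h

theorem ray_bound {Ω : Set E3} (hΩ : IsOpen Ω) (A : (Fin 3 → ℝ) ≃L[ℝ] E3)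
    (hA : ∀ i, ∀ x ∈ Ω, ∀ t : ℝ, 0 ≤ t → x + t • A (Pi.single i 1) ∈ Ω)
    {w : E3 → ℝ} (hw : ContDiffOn ℝ 1 w Ω) (R : ℝ) (hR : ∀ x, R ≤ ‖x‖ → w x = 0)
    (y : Fin 3 → ℝ) (hy : A y ∈ Ω) (i : Fin 3) :
    ‖w (A y)‖ₑ ≤ ‖(A : (Fin 3 → ℝ) →L[ℝ] E3)‖ₑ * ∫⁻ s : ℝ,
      (A ⁻¹' Ω).indicator (fun z => ‖fderiv ℝ w (A z)‖ₑ) (Function.update y i s) := by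
  set v := A (Pi.single i 1) with hv
  have hv0 : v ≠ 0 := by
    rw [hv]
    intro h
    have := A.map_eq_zero_iff.1 h
    simp at this
  have hvn : 0 < ‖v‖ := norm_pos_iff.2 hv0
  obtain ⟨T, hT0, hT⟩ : ∃ T : ℝ, 0 ≤ T ∧ w (A y + T • v) = 0 := by
    refine ⟨(‖A y‖ + |R|) / ‖v‖, by positivity, hR _ ?_⟩
    have h1 : ‖((‖A y‖ + |R|) / ‖v‖) • v‖ = ‖A y‖ + |R| := by
      rw [norm_smul, Real.norm_of_nonneg (by positivity)]
      field_simp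
    have h2 := norm_sub_norm_le (((‖A y‖ + |R|) / ‖v‖) • v) (-(A y))
    rw [h1, norm_neg, sub_neg_eq_add, add_comm _ (A y)] at h2
    have := le_abs_self R
    linarith
  have hb := seg_bound hΩ hw (A y) v T hT0 (hA i _ hy)
  rw [hT, zero_sub, enorm_neg] at hb
  have hvA : ‖v‖ₑ ≤ ‖(A : (Fin 3 → ℝ) →L[ℝ] E3)‖ₑ := by
    have := (A : (Fin 3 → ℝ) →L[ℝ] E3).le_opENorm (Pi.single i 1)
    have h1 : ‖(Pi.single i 1 : Fin 3 → ℝ)‖ₑ = 1 := by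
      rw [← ofReal_norm, Pi.norm_single]; simp
    rw [h1, mul_one] at this
    exact this
  have heq : ∀ t : ℝ, A y + t • v = A (Function.update y i (y i + t)) := by
    intro t
    rw [hv, ← map_smul, ← map_add]
    congr 1
    ext j
    by_cases h : j = i
    · subst h; simp
    · simp [h]
  calc ‖w (A y)‖ₑ ≤ _ := hb
    _ = ∫⁻ t in Ioc 0 T, ‖v‖ₑ * (A ⁻¹' Ω).indicator (fun z => ‖fderiv ℝ w (A z)‖ₑ)
          (Function.update y i (y i + t)) := by
        refine setLIntegral_congr_fun measurableSet_Ioc fun t ht => ?_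
        have hm := hA i _ hy t ht.1.le
        rw [← hv, heq t] at hm
        rw [indicator_of_mem (by exact hm), heq t, mul_comm]
    _ ≤ ∫⁻ t, ‖v‖ₑ * (A ⁻¹' Ω).indicator (fun z => ‖fderiv ℝ w (A z)‖ₑ)
          (Function.update y i (y i + t)) := setLIntegral_le_lintegral _ _
    _ = ∫⁻ t, ‖v‖ₑ * (A ⁻¹' Ω).indicator (fun z => ‖fderiv ℝ w (A z)‖ₑ)
          (Function.update y i t) := lintegral_add_left_eq_self (fun t => ‖v‖ₑ *
            (A ⁻¹' Ω).indicator (fun z => ‖fderiv ℝ w (A z)‖ₑ) (Function.update y i t)) (y i)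
    _ = ‖v‖ₑ * ∫⁻ t, (A ⁻¹' Ω).indicator (fun z => ‖fderiv ℝ w (A z)‖ₑ)
          (Function.update y i t) := lintegral_const_mul' _ _ (by simp)
    _ ≤ _ := by gcongr

theorem core {Ω : Set E3} (hΩ : IsOpen Ω) (A : (Fin 3 → ℝ) ≃L[ℝ] E3)
    (hA : ∀ i, ∀ x ∈ Ω, ∀ t : ℝ, 0 ≤ t → x + t • A (Pi.single i 1) ∈ Ω) :
    ∃ C : ℝ≥0∞, C ≠ ∞ ∧ ∀ u : E3 → ℝ, ContDiffOn ℝ 1 u Ω →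
      (∃ R : ℝ, ∀ x, R ≤ ‖x‖ → u x = 0) → ∫⁻ x in Ω, ‖u x‖ₑ ^ 6 ≠ ∞ →
      ∫⁻ x in Ω, ‖u x‖ₑ ^ 6 ≤ C * (∫⁻ x in Ω, ‖fderiv ℝ u x‖ₑ ^ 2) ^ 3 := by
  obtain ⟨c, hc0, hc⟩ := exists_scalar A
  set K : ℝ≥0∞ := ‖(A : (Fin 3 → ℝ) →L[ℝ] E3)‖ₑ with hK
  have hKt : K ≠ ∞ := by simp [hK]
  set D : ℝ≥0∞ := (K * 4 * c) ^ (3/2 : ℝ) / c with hD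
  have hc0' : (c : ℝ≥0∞) ≠ 0 := by simpa using hc0
  have hDt : D ≠ ∞ := by
    apply ENNReal.div_ne_top _ hc0'
    exact ENNReal.rpow_ne_top_of_nonneg (by norm_num)
      (ENNReal.mul_ne_top (ENNReal.mul_ne_top hKt (by simp)) (by simp))
  refine ⟨D ^ 4, by finiteness, ?_⟩
  rintro u hu ⟨R, hR⟩ hfin
  set X := ∫⁻ x in Ω, ‖u x‖ₑ ^ 6 with hX
  set Y := ∫⁻ x in Ω, ‖fderiv ℝ u x‖ₑ ^ 2 with hY
  have hw : ContDiffOn ℝ 1 (fun x => u x ^ 4) Ω := hu.pow 4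
  have hwR : ∀ x, R ≤ ‖x‖ → (fun x => u x ^ 4) x = 0 := fun x hx => by simp [hR x hx]
  set w := fun x => u x ^ 4 with hwdef
  have hmeasw : Measurable fun x => ‖fderiv ℝ w x‖ₑ := (measurable_fderiv ℝ w).enorm
  have hmeasu : Measurable fun x => ‖fderiv ℝ u x‖ₑ := (measurable_fderiv ℝ u).enorm
  set F : (Fin 3 → ℝ) → ℝ≥0∞ := (A ⁻¹' Ω).indicator (fun z => ‖fderiv ℝ w (A z)‖ₑ) with hF
  have hAm : Measurable A := A.continuous.measurable
  have hFm : Measurable F := (hmeasw.comp hAm).indicator (hΩ.measurableSet.preimage hAm)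
  have hcv : ∀ g : E3 → ℝ≥0∞, ∫⁻ y in A ⁻¹' Ω, g (A y) = c * ∫⁻ x in Ω, g x := by
    intro g
    have hme : MeasurableEmbedding A := A.toHomeomorph.measurableEmbedding
    rw [← hme.lintegral_map, ← hme.restrict_map, hc, Measure.restrict_smul, lintegral_smul_measure]
    rfl
  have hgrid := lintegral_prod_lintegral_pow_le (ι := Fin 3) (A := fun _ => ℝ) (fun _ => volume)
    (p := 3/2) (by rw [Real.holderConjugate_iff]; norm_num) hFm
  rw [← volume_pi] at hgrid
  have hpt : ∀ y, A y ∈ Ω → ‖u (A y)‖ₑ ^ 6 ≤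
      K ^ (3/2 : ℝ) * ∏ i, (∫⁻ s : ℝ, F (Function.update y i s)) ^ (1/2 : ℝ) := by
    intro y hy
    have h1 : ∀ i, ‖u (A y)‖ₑ ^ 2 ≤
        K ^ (1/2 : ℝ) * (∫⁻ s : ℝ, F (Function.update y i s)) ^ (1/2 : ℝ) := by
      intro i
      have := ray_bound hΩ A hA hw R hwR y hy i
      rw [← ENNReal.mul_rpow_of_nonneg _ _ (by norm_num : (0:ℝ) ≤ 1/2)]
      refine le_trans (le_of_eq ?_) (ENNReal.rpow_le_rpow this (by norm_num : (0:ℝ) ≤ 1/2))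
      simp only [hwdef, enorm_pow]
      rw [← ENNReal.rpow_natCast, ← ENNReal.rpow_natCast, ← ENNReal.rpow_mul]
      norm_num
    calc ‖u (A y)‖ₑ ^ 6 = ∏ i : Fin 3, ‖u (A y)‖ₑ ^ 2 := by
          simp; ring
      _ ≤ ∏ i : Fin 3, (K ^ (1/2 : ℝ) * (∫⁻ s : ℝ, F (Function.update y i s)) ^ (1/2 : ℝ)) :=
          Finset.prod_le_prod' fun i _ => h1 i
      _ = _ := by
          rw [Finset.prod_mul_distrib]
          congr 1
          simp only [Finset.prod_const, Finset.card_univ, Fintype.card_fin]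
          rw [← ENNReal.rpow_natCast, ← ENNReal.rpow_mul]
          norm_num
  have hFint : ∫⁻ y, F y = c * ∫⁻ x in Ω, ‖fderiv ℝ w x‖ₑ := by
    rw [hF, lintegral_indicator (hΩ.measurableSet.preimage hAm)]
    exact hcv fun x => ‖fderiv ℝ w x‖ₑ
  have h1 : c * X ≤ K ^ (3/2 : ℝ) * (c * ∫⁻ x in Ω, ‖fderiv ℝ w x‖ₑ) ^ (3/2 : ℝ) := by
    rw [← hFint, hX, ← hcv fun x => ‖u x‖ₑ ^ 6]
    calc _ ≤ ∫⁻ y in A ⁻¹' Ω,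
          K ^ (3/2 : ℝ) * ∏ i, (∫⁻ s : ℝ, F (Function.update y i s)) ^ (1/2 : ℝ) :=
          setLIntegral_mono' (hΩ.measurableSet.preimage hAm) hpt
      _ ≤ ∫⁻ y, K ^ (3/2 : ℝ) * ∏ i, (∫⁻ s : ℝ, F (Function.update y i s)) ^ (1/2 : ℝ) :=
          setLIntegral_le_lintegral _ _
      _ = K ^ (3/2 : ℝ) * ∫⁻ y, ∏ i, (∫⁻ s : ℝ, F (Function.update y i s)) ^ (1/2 : ℝ) :=
          lintegral_const_mul' _ _ (ENNReal.rpow_ne_top_of_nonneg (by norm_num) hKt)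
      _ ≤ _ := by
          gcongr
          refine le_trans (le_of_eq ?_) hgrid
          norm_num
  have hum : AEMeasurable (fun x => ‖u x‖ₑ) (volume.restrict Ω) :=
    (hu.continuousOn.aemeasurable hΩ.measurableSet).enorm
  have h2 : ∫⁻ x in Ω, ‖fderiv ℝ w x‖ₑ ≤ 4 * (X ^ (1/2 : ℝ) * Y ^ (1/2 : ℝ)) := by
    calc _ = ∫⁻ x in Ω, 4 * (‖u x‖ₑ ^ 3 * ‖fderiv ℝ u x‖ₑ) := by
          refine setLIntegral_congr_fun hΩ.measurableSet fun x hx => ?_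
          have hd := ((hu.differentiableOn one_ne_zero).differentiableAt
            (hΩ.mem_nhds hx)).hasFDerivAt.pow 4
          simp only [hwdef]
          rw [hd.fderiv, enorm_smul]
          simp [enorm_mul, enorm_pow, mul_assoc]
          congr 1
          rw [← ofReal_norm]; norm_num
      _ = 4 * ∫⁻ x in Ω, (‖u x‖ₑ ^ 3 * ‖fderiv ℝ u x‖ₑ) := lintegral_const_mul' _ _ (by simp)
      _ ≤ _ := by
          gcongr
          have := ENNReal.lintegral_mul_le_Lp_mul_Lq (volume.restrict Ω)
            (Real.HolderConjugate.two_two) (hum.pow_const 3) hmeasu.aemeasurable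
          refine this.trans (le_of_eq ?_)
          rw [hX, hY]
          congr! 4 with x x
          · rw [ENNReal.rpow_two, ← pow_mul]
          · rw [ENNReal.rpow_two]
  have h3 : X ≤ D * (X ^ (3/4 : ℝ) * Y ^ (3/4 : ℝ)) := by
    have h4 : c * X ≤ (K * 4 * c) ^ (3/2 : ℝ) * (X ^ (3/4 : ℝ) * Y ^ (3/4 : ℝ)) := by
      refine h1.trans ?_
      calc _ ≤ K ^ (3/2 : ℝ) * (c * (4 * (X ^ (1/2 : ℝ) * Y ^ (1/2 : ℝ)))) ^ (3/2 : ℝ) := by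
            gcongr
        _ = (K * 4 * c * (X ^ (1/2 : ℝ) * Y ^ (1/2 : ℝ))) ^ (3/2 : ℝ) := by
            rw [← ENNReal.mul_rpow_of_nonneg _ _ (by norm_num : (0:ℝ) ≤ 3/2)]
            congr 1; ring
        _ = _ := by
            rw [ENNReal.mul_rpow_of_nonneg _ _ (by norm_num : (0:ℝ) ≤ 3/2),
              ENNReal.mul_rpow_of_nonneg (X ^ (1/2 : ℝ)) _ (by norm_num : (0:ℝ) ≤ 3/2),
              ← ENNReal.rpow_mul, ← ENNReal.rpow_mul]
            norm_num
    rw [hD, ENNReal.div_eq_inv_mul, mul_assoc, ← ENNReal.div_eq_inv_mul,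
      ENNReal.le_div_iff_mul_le (Or.inl hc0') (Or.inl (by simp)), mul_comm]
    exact h4
  by_cases hX0 : X = 0
  · simp [hX0]
  have hXp0 : X ^ (3/4 : ℝ) ≠ 0 := by
    simp [ENNReal.rpow_eq_zero_iff, hX0, hfin]
  have hXpt : X ^ (3/4 : ℝ) ≠ ∞ := ENNReal.rpow_ne_top_of_nonneg (by norm_num) hfin
  have h5 : X ^ (1/4 : ℝ) ≤ D * Y ^ (3/4 : ℝ) := by
    have h6 : X ^ (1/4 : ℝ) * X ^ (3/4 : ℝ) = X := by
      rw [← ENNReal.rpow_add _ _ hX0 hfin]; norm_num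
    rw [← ENNReal.mul_le_mul_iff_left hXp0 hXpt, h6]
    calc X ≤ _ := h3
      _ = _ := by ring
  calc X = (X ^ (1/4 : ℝ)) ^ 4 := by
        rw [← ENNReal.rpow_natCast, ← ENNReal.rpow_mul]; norm_num
    _ ≤ (D * Y ^ (3/4 : ℝ)) ^ 4 := by gcongr
    _ = _ := by
        rw [mul_pow, ← ENNReal.rpow_natCast (Y ^ (3/4 : ℝ)), ← ENNReal.rpow_mul,
          ← ENNReal.rpow_natCast Y 3]
        norm_num

/-- skew coordinates adapted to the cone of directions staying in the domain -/
def skew (L : ℝ) : (Fin 3 → ℝ) ≃L[ℝ] E3 :=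
  LinearEquiv.toContinuousLinearEquiv
  { toFun := fun y => WithLp.toLp 2 ![y 0 + L * y 1 + L * y 2, y 1, y 2]
    invFun := fun x => ![x 0 - L * x 1 - L * x 2, x 1, x 2]
    map_add' := fun x y => by
      ext i; fin_cases i <;> simp
      ring
    map_smul' := fun c y => by
      ext i; fin_cases i <;> simp
      ring
    left_inv := fun y => by
      ext i; fin_cases i <;> simp
      ring
    right_inv := fun x => by
      ext i; fin_cases i <;> simp
      ring }

theorem skew_apply (L : ℝ) (y : Fin 3 → ℝ) :
    skew L y = WithLp.toLp 2 ![y 0 + L * y 1 + L * y 2, y 1, y 2] := rfl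

theorem proj2_cont : Continuous proj2 := by
  have : proj2 = fun x : E3 => WithLp.toLp 2 ![x 1, x 2] := rfl
  rw [this]
  refine (PiLp.continuous_toLp 2 _).comp ?_
  refine continuous_pi fun i => ?_
  fin_cases i <;> simp <;> fun_prop

theorem isOpen_Omg {M : E2 → ℝ} (hM : Continuous M) : IsOpen (Omg M) := by
  have := proj2_cont
  exact isOpen_lt (by fun_prop) (by fun_prop)

theorem cone_Omg {M : E2 → ℝ} {L : NNReal} (hM : LipschitzWith L M) (i : Fin 3) (x : E3)
    (hx : x ∈ Omg M) (t : ℝ) (ht : 0 ≤ t) : x + t • skew L (Pi.single i 1) ∈ Omg M := by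
  simp only [Omg, mem_ofPred_eq] at hx ⊢
  have h := hM.dist_le_mul (proj2 (x + t • skew L (Pi.single i 1))) (proj2 x)
  rw [Real.dist_eq] at h
  have h' := (le_abs_self _).trans h
  have hd : L * dist (proj2 (x + t • skew L (Pi.single i 1))) (proj2 x) ≤
      t * (skew L (Pi.single i 1)) 0 := by
    rw [EuclideanSpace.dist_eq]
    fin_cases i
    · simp [proj2, skew_apply, Fin.sum_univ_two, ht]
    · simp [proj2, skew_apply, Fin.sum_univ_two, Real.sqrt_sq_eq_abs, Real.dist_eq, abs_of_nonneg ht, mul_comm]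
    · simp [proj2, skew_apply, Fin.sum_univ_two, Real.sqrt_sq_eq_abs, Real.dist_eq, abs_of_nonneg ht, mul_comm]
  have : (x + t • skew L (Pi.single i 1)) 0 = x 0 + t * (skew L (Pi.single i 1)) 0 := by simp
  rw [this]
  linarith

/-- cutoff functions -/
theorem exists_cutoff : ∃ K : ℝ, 0 ≤ K ∧ ∀ n : ℕ, ∃ χ : E3 → ℝ, ContDiff ℝ 1 χ ∧
    (∀ x, ‖x‖ ≤ (n + 1 : ℝ) → χ x = 1) ∧ (∀ x, 2 * (n + 1 : ℝ) ≤ ‖x‖ → χ x = 0) ∧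
    (∀ x, |χ x| ≤ 1) ∧ ∀ x, ‖fderiv ℝ χ x‖ ≤ K / (n + 1) := by
  let φ : ContDiffBump (0 : E3) := ⟨1, 2, by norm_num, by norm_num⟩
  have hφ : ContDiff ℝ 1 φ := φ.contDiff
  have hc : Continuous (fderiv ℝ φ) := hφ.continuous_fderiv one_ne_zero
  obtain ⟨K, hK⟩ := (φ.hasCompactSupport.fderiv ℝ).exists_bound_of_continuous hc
  refine ⟨K, (norm_nonneg _).trans (hK 0), fun n => ?_⟩
  have hn : (0 : ℝ) < n + 1 := by positivity
  have hnorm : ∀ x : E3, ‖((n + 1 : ℝ)⁻¹) • x‖ = ‖x‖ / (n + 1) := by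
    intro x
    rw [norm_smul, Real.norm_of_nonneg (by positivity)]; field_simp
  refine ⟨fun x => φ (((n + 1 : ℝ)⁻¹) • x), hφ.comp (by fun_prop), ?_, ?_, ?_, ?_⟩
  · intro x hx
    apply φ.one_of_mem_closedBall
    rw [mem_closedBall_zero_iff, hnorm, div_le_iff₀ hn]
    simpa [φ] using hx
  · intro x hx
    apply φ.zero_of_le_dist
    rw [dist_zero_right, hnorm, le_div_iff₀ hn]
    exact hx
  · intro x
    rw [abs_of_nonneg φ.nonneg]
    exact φ.le_one
  · intro x
    have h1 : HasFDerivAt (fun x : E3 => ((n + 1 : ℝ)⁻¹) • x)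
        (((n + 1 : ℝ)⁻¹) • ContinuousLinearMap.id ℝ E3) x :=
      (((n + 1 : ℝ)⁻¹) • ContinuousLinearMap.id ℝ E3).hasFDerivAt
    have h2 := ((hφ.differentiable one_ne_zero) (((n + 1 : ℝ)⁻¹) • x)).hasFDerivAt.comp x h1
    have h3 : fderiv ℝ (fun x => φ (((n + 1 : ℝ)⁻¹) • x)) x = _ := h2.fderiv
    rw [h3, ContinuousLinearMap.comp_smul, ContinuousLinearMap.comp_id, norm_smul,
      Real.norm_of_nonneg (by positivity), div_eq_inv_mul]
    gcongr
    exact hK _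

theorem limit_step {Ω : Set E3} (hΩ : IsOpen Ω) {C : ℝ≥0∞} (hC : C ≠ ∞)
    (hcore : ∀ u : E3 → ℝ, ContDiffOn ℝ 1 u Ω →
      (∃ R : ℝ, ∀ x, R ≤ ‖x‖ → u x = 0) → ∫⁻ x in Ω, ‖u x‖ₑ ^ 6 ≠ ∞ →
      ∫⁻ x in Ω, ‖u x‖ₑ ^ 6 ≤ C * (∫⁻ x in Ω, ‖fderiv ℝ u x‖ₑ ^ 2) ^ 3)
    (f : E3 → ℝ) (hf : ContDiffOn ℝ 1 f (closure Ω))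
    (hf2 : ∫⁻ x in Ω, ‖f x‖ₑ ^ 2 ≠ ∞) :
    ∫⁻ x in Ω, ‖f x‖ₑ ^ 6 ≤ C * (2 * ∫⁻ x in Ω, ‖fderiv ℝ f x‖ₑ ^ 2) ^ 3 := by
  obtain ⟨K, hK0, hK⟩ := exists_cutoff
  choose χ hχ1 hχ2 hχ3 hχ4 hχ5 using hK
  have hfΩ : ContDiffOn ℝ 1 f Ω := hf.mono subset_closure
  let u : ℕ → E3 → ℝ := fun n x => χ n x * f x
  have hu : ∀ n, ContDiffOn ℝ 1 (u n) Ω := fun n => (hχ1 n).contDiffOn.mul hfΩ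
  set Y := ∫⁻ x in Ω, ‖fderiv ℝ f x‖ₑ ^ 2 with hY
  set Z := ∫⁻ x in Ω, ‖f x‖ₑ ^ 2 with hZ
  have hYn : ∀ n : ℕ, ∫⁻ x in Ω, ‖fderiv ℝ (u n) x‖ₑ ^ 2 ≤
      2 * Y + ENNReal.ofReal (2 * (K / (n + 1)) ^ 2) * Z := by
    intro n
    have hpt : ∀ x ∈ Ω, ‖fderiv ℝ (u n) x‖ₑ ^ 2 ≤ 2 * ‖fderiv ℝ f x‖ₑ ^ 2 +
        ENNReal.ofReal (2 * (K / (n + 1)) ^ 2) * ‖f x‖ₑ ^ 2 := by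
      intro x hx
      have hd := ((hχ1 n).differentiable one_ne_zero x).hasFDerivAt.mul
        ((hfΩ.differentiableOn one_ne_zero).differentiableAt (hΩ.mem_nhds hx)).hasFDerivAt
      have hd' : fderiv ℝ (u n) x = _ := hd.fderiv
      have hb : ‖fderiv ℝ (u n) x‖ ≤ ‖fderiv ℝ f x‖ + K / (n + 1) * |f x| := by
        rw [hd']
        refine (norm_add_le _ _).trans ?_
        rw [norm_smul, norm_smul, Real.norm_eq_abs, Real.norm_eq_abs, mul_comm (|f x|)]
        have := hχ4 n x
        have := hχ5 n x
        gcongr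
        exact mul_le_of_le_one_left (norm_nonneg _) (hχ4 n x)
      have hb2 : ‖fderiv ℝ (u n) x‖ ^ 2 ≤
          2 * ‖fderiv ℝ f x‖ ^ 2 + 2 * (K / (n + 1)) ^ 2 * |f x| ^ 2 := by
        have := pow_le_pow_left₀ (norm_nonneg _) hb 2
        nlinarith [sq_nonneg (‖fderiv ℝ f x‖ - K / (n + 1) * |f x|)]
      have h22 : ∀ a : ℝ≥0∞, 2 * a = ENNReal.ofReal 2 * a := fun a => by simp
      rw [← ofReal_norm, ← ofReal_norm, ← ofReal_norm, ← ENNReal.ofReal_pow (norm_nonneg _),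
        ← ENNReal.ofReal_pow (norm_nonneg _), ← ENNReal.ofReal_pow (norm_nonneg _),
        ← ENNReal.ofReal_mul (by positivity),
        h22, ← ENNReal.ofReal_mul (by positivity),
        ← ENNReal.ofReal_add (by positivity) (by positivity)]
      exact ENNReal.ofReal_le_ofReal hb2
    refine (setLIntegral_mono' hΩ.measurableSet hpt).trans (le_of_eq ?_)
    have hm : Measurable fun x => ‖fderiv ℝ f x‖ₑ := (measurable_fderiv ℝ f).enorm
    rw [lintegral_add_left (by fun_prop), lintegral_const_mul' _ _ (by simp),
      lintegral_const_mul' _ _ ENNReal.ofReal_ne_top]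
  have hfin : ∀ n, ∫⁻ x in Ω, ‖u n x‖ₑ ^ 6 ≠ ∞ := by
    intro n
    have hcomp : IsCompact (closure Ω ∩ Metric.closedBall 0 (2 * (n + 1 : ℝ))) :=
      (isCompact_closedBall _ _).inter_left isClosed_closure
    obtain ⟨B, hB⟩ := hcomp.exists_bound_of_continuousOn
      (hf.continuousOn.mono inter_subset_left)
    have hpt : ∀ x ∈ Ω, ‖u n x‖ₑ ^ 6 ≤ (Metric.closedBall (0 : E3) (2 * (n + 1 : ℝ))).indicator
        (fun _ => (ENNReal.ofReal B) ^ 6) x := by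
      intro x hx
      by_cases hxb : x ∈ Metric.closedBall (0 : E3) (2 * (n + 1 : ℝ))
      · rw [indicator_of_mem hxb]
        gcongr
        rw [← ofReal_norm]
        apply ENNReal.ofReal_le_ofReal
        refine le_trans ?_ (hB x ⟨subset_closure hx, hxb⟩)
        simp only [u, norm_mul]
        exact mul_le_of_le_one_left (norm_nonneg _) (hχ4 n x)
      · have : u n x = 0 := by
          simp only [u]
          rw [hχ3 n x, zero_mul]
          simp at hxb
          exact hxb.le
        simp [this]
    refine ((setLIntegral_mono' hΩ.measurableSet hpt).trans
      (setLIntegral_le_lintegral _ _)).trans_lt ?_ |>.ne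
    rw [lintegral_indicator Metric.isClosed_closedBall.measurableSet]
    rw [setLIntegral_const]
    exact ENNReal.mul_lt_top (by finiteness) measure_closedBall_lt_top
  have hbd : ∀ n : ℕ, ∫⁻ x in Ω, ‖u n x‖ₑ ^ 6 ≤
      C * (2 * Y + ENNReal.ofReal (2 * (K / (n + 1)) ^ 2) * Z) ^ 3 := by
    intro n
    refine (hcore (u n) (hu n) ⟨2 * (n + 1), fun x hx => ?_⟩ (hfin n)).trans ?_
    · simp [u, hχ3 n x hx]
    · gcongr
      exact hYn n
  have hlim : Tendsto (fun n : ℕ => C * (2 * Y + ENNReal.ofReal (2 * (K / (n + 1)) ^ 2) * Z) ^ 3)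
      atTop (nhds (C * (2 * Y) ^ 3)) := by
    have h1 : Tendsto (fun n : ℕ => 2 * (K / ((n : ℝ) + 1)) ^ 2) atTop (nhds 0) := by
      have : Tendsto (fun n : ℕ => K / ((n : ℝ) + 1)) atTop (nhds 0) := by
        simpa [div_eq_mul_inv] using (tendsto_one_div_add_atTop_nhds_zero_nat (𝕜 := ℝ)).const_mul K
      simpa using (this.pow 2).const_mul 2
    have h2 : Tendsto (fun n : ℕ => ENNReal.ofReal (2 * (K / ((n : ℝ) + 1)) ^ 2) * Z) atTop
        (nhds 0) := by
      simpa using ENNReal.Tendsto.mul_const (ENNReal.tendsto_ofReal h1) (Or.inr hf2)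
    have h3 : Tendsto (fun n : ℕ => 2 * Y + ENNReal.ofReal (2 * (K / (n + 1)) ^ 2) * Z) atTop
        (nhds (2 * Y)) := by
      simpa using tendsto_const_nhds.add h2
    exact ENNReal.Tendsto.const_mul (ENNReal.Tendsto.pow h3) (Or.inr hC)
  have hconv : ∀ x, Tendsto (fun n => ‖u n x‖ₑ ^ 6) atTop (nhds (‖f x‖ₑ ^ 6)) := by
    intro x
    refine tendsto_const_nhds.congr' ?_
    obtain ⟨N, hN⟩ := exists_nat_ge ‖x‖
    filter_upwards [eventually_ge_atTop N] with n hn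
    have : (N : ℝ) ≤ n := by exact_mod_cast hn
    simp only [u]
    rw [hχ2 n x (by linarith), one_mul]
  calc ∫⁻ x in Ω, ‖f x‖ₑ ^ 6 = ∫⁻ x in Ω, liminf (fun n => ‖u n x‖ₑ ^ 6) atTop := by
        refine lintegral_congr fun x => ?_
        exact (hconv x).liminf_eq.symm
    _ ≤ liminf (fun n => ∫⁻ x in Ω, ‖u n x‖ₑ ^ 6) atTop :=
        lintegral_liminf_le' fun n =>
          (((hu n).continuousOn.aemeasurable hΩ.measurableSet).enorm.pow_const 6)
    _ ≤ liminf (fun n : ℕ => C * (2 * Y + ENNReal.ofReal (2 * (K / (n + 1)) ^ 2) * Z) ^ 3) atTop :=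
        liminf_le_liminf (Eventually.of_forall hbd)
    _ = _ := hlim.liminf_eq

theorem sobolev_L6_inequality (M : E2 → ℝ) (hM : ContDiff ℝ (⊤ : ℕ∞) M)
    (hMint : ∀ j ≤ 9, Integrable fun x' : E2 => ‖iteratedFDeriv ℝ j M x'‖ ^ 2) :
    ∃ C : ℝ, 0 < C ∧
      ∀ f : E3 → ℝ, ContDiffOn ℝ 1 f (closure (Omg M)) →
        IntegrableOn (fun x => f x ^ 2) (Omg M) →
        IntegrableOn (fun x => ‖fderiv ℝ f x‖ ^ 2) (Omg M) →
        (∫⁻ x in Omg M, ENNReal.ofReal (|f x| ^ 6)) ^ (1/6 : ℝ) ≤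
          ENNReal.ofReal (C * (∫ x in Omg M, ‖fderiv ℝ f x‖ ^ 2) ^ (1/2 : ℝ)) := by
  obtain ⟨L, hL⟩ := M_lip hM hMint
  have hΩ : IsOpen (Omg M) := isOpen_Omg hM.continuous
  obtain ⟨C, hC, hcore⟩ := core hΩ (skew L) (cone_Omg hL)
  refine ⟨((8 * C) ^ (1/6 : ℝ)).toReal + 1, by positivity, fun f hf hf2 hdf => ?_⟩
  have hZ : ∫⁻ x in Omg M, ‖f x‖ₑ ^ 2 ≠ ∞ := by
    have := hf2.2
    rw [hasFiniteIntegral_iff_enorm] at this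
    simpa only [enorm_pow] using this.ne
  have hmain := limit_step hΩ hC hcore f hf hZ
  have hY : ∫⁻ x in Omg M, ‖fderiv ℝ f x‖ₑ ^ 2 =
      ENNReal.ofReal (∫ x in Omg M, ‖fderiv ℝ f x‖ ^ 2) := by
    rw [ofReal_integral_eq_lintegral_ofReal hdf (Eventually.of_forall fun x => by positivity)]
    refine lintegral_congr fun x => ?_
    rw [ENNReal.ofReal_pow (norm_nonneg _), ofReal_norm]
  have hX : ∫⁻ x in Omg M, ENNReal.ofReal (|f x| ^ 6) = ∫⁻ x in Omg M, ‖f x‖ₑ ^ 6 := by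
    refine lintegral_congr fun x => ?_
    rw [ENNReal.ofReal_pow (abs_nonneg _), ← Real.norm_eq_abs, ofReal_norm]
  have hI0 : 0 ≤ ∫ x in Omg M, ‖fderiv ℝ f x‖ ^ 2 := integral_nonneg fun x => by positivity
  set I := ∫ x in Omg M, ‖fderiv ℝ f x‖ ^ 2 with hI
  rw [hY] at hmain
  have hCt : (8 * C) ^ (1/6 : ℝ) ≠ ∞ :=
    ENNReal.rpow_ne_top_of_nonneg (by norm_num) (ENNReal.mul_ne_top (by simp) hC)
  rw [hX, ENNReal.ofReal_mul (by positivity), ← ENNReal.ofReal_rpow_of_nonneg hI0 (by norm_num)]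
  calc _ ≤ (C * (2 * ENNReal.ofReal I) ^ 3) ^ (1/6 : ℝ) := by gcongr
    _ = (8 * C * (ENNReal.ofReal I) ^ (3 : ℝ)) ^ (1/6 : ℝ) := by
        congr 1
        rw [show (3 : ℝ) = ((3 : ℕ) : ℝ) by norm_num, ENNReal.rpow_natCast]
        ring
    _ = (8 * C) ^ (1/6 : ℝ) * (ENNReal.ofReal I) ^ (1/2 : ℝ) := by
        rw [ENNReal.mul_rpow_of_nonneg _ _ (by norm_num : (0:ℝ) ≤ 1/6), ← ENNReal.rpow_mul]
        norm_num
    _ ≤ _ := by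
        gcongr
        rw [← ENNReal.ofReal_toReal hCt]
        apply ENNReal.ofReal_le_ofReal
        simp
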